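/- For all 1 ≤ i, j ≤ n, the operators D_i and D_j commute: D_iD_j = D_jD_i. -/

import Mathlib

noncomputable section

/-- The Laurent polynomial ring `R[X₁^{±1}, …, Xₙ^{±1}]` in `n` variables over `R`,
realised as the monoid algebra of the additive monoid `Fin n →₀ ℤ` of exponent vectors. -/
abbrev Laur (R : Type*) [CommRing R] (n : ℕ) : Type _ :=
  AddMonoidAlgebra R (Fin n →₀ ℤ)

variable {R : Type*} [CommRing R] {n : ℕ}

/-- The monomial `c · X^a`. -/
def mono (a : Fin n →₀ ℤ) (c : R) : Laur R n := AddMonoidAlgebra.single a c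

/-- The generator `X_i`. -/
def Xel (i : Fin n) : Laur R n := mono (Finsupp.single i 1) 1

/-- The element `X_i⁻¹`. -/
def XinvEl (i : Fin n) : Laur R n := mono (Finsupp.single i (-1)) 1

/-- Multiplication by a Laurent polynomial, as a linear endomorphism. -/
def mulOp (x : Laur R n) : Module.End R (Laur R n) := LinearMap.mulLeft R x

/-- The operator of multiplication by `X_i`, with `ℕ`-indexing (`0`-based; junk value `1`
out of range). -/
def XOp (i : ℕ) : Module.End R (Laur R n) :=
  if h : i < n then mulOp (Xel ⟨i, h⟩) else 1

/-- The operator of multiplication by `X_i⁻¹`, with `ℕ`-indexing. -/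
def XinvOp (i : ℕ) : Module.End R (Laur R n) :=
  if h : i < n then mulOp (XinvEl ⟨i, h⟩) else 1

/-- Ascending product `f s * f (s+1) * ⋯ * f (s+len-1)` (equal to `1` when `len = 0`). -/
def aF {M : Type*} [Monoid M] (f : ℕ → M) (s len : ℕ) : M :=
  ((List.range' s len).map f).prod

/-- Descending product `f (s+len-1) * ⋯ * f (s+1) * f s` (equal to `1` when `len = 0`). -/
def dF {M : Type*} [Monoid M] (f : ℕ → M) (s len : ℕ) : M :=
  (((List.range' s len).map f).reverse).prod

/-- Integer power `u^z`, where `v` is a designated (two-sided) inverse of `u`. -/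
def zpowOp {M : Type*} [Monoid M] (u v : M) (z : ℤ) : M :=
  if 0 ≤ z then u ^ z.toNat else v ^ (-z).toNat

/-!
Write `E = D_n = (q - q⁻¹)⁻¹ X_n⁻¹ (Y_n - Y_n⁻¹)`. Since `D_i = T_i D_{i+1} T_i` and `E` commutes
with `T_1, …, T_{n-2}`, the braid relations reduce the commutativity of all `D_i` to the single
relation `T_{n-1} E T_{n-1} E = E T_{n-1} E T_{n-1}`. Set `t = T_{n-1}`, `x = X_n⁻¹` and
`y = Y_n`. Then `t x t = X_{n-1}⁻¹` commutes with `x`, and `t y t = Y_{n-1}` commutes with `y`.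
Moving `x` to the left past `(y - y⁻¹) t` through `y t x = t x t y t` leaves an identity in `t`
and `y`, which follows from the quadratic relation, satisfied by `t` and by its conjugate
`y t y⁻¹`.
-/

section Products

variable {M N : Type*} [Monoid M] [Monoid N]

theorem aF_zero (f : ℕ → M) (s : ℕ) : aF f s 0 = 1 := rfl

theorem dF_zero (f : ℕ → M) (s : ℕ) : dF f s 0 = 1 := rfl

theorem aF_succ_left (f : ℕ → M) (s l : ℕ) : aF f s (l + 1) = f s * aF f (s + 1) l := by
  simp [aF, List.range'_succ]

theorem aF_succ_right (f : ℕ → M) (s l : ℕ) : aF f s (l + 1) = aF f s l * f (s + l) := by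
  simp [aF, List.range'_concat]

theorem dF_succ_left (f : ℕ → M) (s l : ℕ) : dF f s (l + 1) = dF f (s + 1) l * f s := by
  simp [dF, List.range'_succ]

theorem aF_congr {f g : ℕ → M} {s l : ℕ} (h : ∀ k, s ≤ k → k < s + l → f k = g k) :
    aF f s l = aF g s l :=
  congrArg List.prod <| List.map_congr_left fun k hk ↦
    h k (List.mem_range'_1.1 hk).1 (List.mem_range'_1.1 hk).2

theorem dF_congr {f g : ℕ → M} {s l : ℕ} (h : ∀ k, s ≤ k → k < s + l → f k = g k) :
    dF f s l = dF g s l :=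
  congrArg (fun L ↦ L.reverse.prod) <| List.map_congr_left fun k hk ↦
    h k (List.mem_range'_1.1 hk).1 (List.mem_range'_1.1 hk).2

theorem map_aF (φ : M →* N) (f : ℕ → M) (s l : ℕ) :
    φ (aF f s l) = aF (fun k ↦ φ (f k)) s l := by
  simp [aF, map_list_prod, Function.comp_def]

theorem semiconjBy_aF {f g : ℕ → M} {z : M} {s t : ℕ} :
    ∀ {l : ℕ}, (∀ k < l, SemiconjBy z (f (s + k)) (g (t + k))) →
      SemiconjBy z (aF f s l) (aF g t l)
  | 0, _ => SemiconjBy.one_right z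
  | l + 1, h => by
    rw [aF_succ_right, aF_succ_right]
    exact (semiconjBy_aF fun k hk ↦ h k (hk.trans l.lt_succ_self)).mul_right (h l l.lt_succ_self)

theorem commute_aF {f : ℕ → M} {z : M} {s l : ℕ} (h : ∀ k < l, Commute z (f (s + k))) :
    Commute z (aF f s l) :=
  semiconjBy_aF h

end Products

section BraidFamily

/-- The braid relations of type `A_N` among `T 0, …, T (N - 1)`; the other values of `T` are
unconstrained. -/
structure IsBraidFamily {M : Type*} [Monoid M] (N : ℕ) (T : ℕ → M) : Prop where
  commute {i j : ℕ} (hij : i + 1 < j) (hj : j < N) : Commute (T i) (T j)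
  braid {i : ℕ} (hi : i + 1 < N) : T i * T (i + 1) * T i = T (i + 1) * T i * T (i + 1)

/-- The relations of the extended affine braid group of type `GL_{N+1}` between the finite
generators `T 0, …, T (N - 1)` and the rotation `π`, which corresponds to `π⁻¹` in the notation
of the theorem. -/
structure IsAffineBraidFamily {M : Type*} [Monoid M] (N : ℕ) (T : ℕ → M) (π : M) : Prop
    extends IsBraidFamily N T where
  semiconjBy {k : ℕ} (hk : k + 1 < N) : SemiconjBy π (T (k + 1)) (T k)
  semiconjBy_sq {k : ℕ} (hk : k + 1 = N) : SemiconjBy (π * π) (T 0) (T k)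

theorem IsBraidFamily.semiconjBy_aF {M : Type*} [Monoid M] {N : ℕ} {T : ℕ → M}
    (hT : IsBraidFamily N T) {i m : ℕ} (him : i + 1 < m) (hm : m ≤ N) :
    SemiconjBy (aF T 0 m) (T i) (T (i + 1)) := by
  induction m, him using Nat.le_induction with
  | base =>
    have hcomm : Commute (T (i + 1)) (aF T 0 i) :=
      commute_aF fun k hk ↦ (hT.commute (by omega) (by omega)).symm
    rw [aF_succ_right, aF_succ_right, zero_add, zero_add, SemiconjBy]
    calc aF T 0 i * T i * T (i + 1) * T i
        = aF T 0 i * (T i * T (i + 1) * T i) := by simp only [mul_assoc]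
      _ = aF T 0 i * T (i + 1) * (T i * T (i + 1)) := by
        rw [hT.braid (by omega)]; simp only [mul_assoc]
      _ = T (i + 1) * (aF T 0 i * T i * T (i + 1)) := by
        rw [← hcomm.eq]; simp only [mul_assoc]
  | succ m him ih =>
    rw [aF_succ_right, zero_add]
    exact (ih (by omega)).mul_left (hT.commute him (by omega)).symm

namespace IsAffineBraidFamily

section Monoid

variable {M : Type*} [Monoid M] {N : ℕ} {T : ℕ → M} {π : M}

theorem units_of_val {T : ℕ → Mˣ} {π : Mˣ}
    (hT : IsAffineBraidFamily N (fun k ↦ (T k : M)) (π : M)) : IsAffineBraidFamily N T π where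
  commute hij hj := (hT.commute hij hj).units_of_val
  braid hi := Units.val_injective (mod_cast hT.braid hi)
  semiconjBy hk := (hT.semiconjBy hk).units_of_val
  semiconjBy_sq hk := SemiconjBy.units_of_val (mod_cast hT.semiconjBy_sq hk)

theorem commute_rotation_mul_aF (hT : IsAffineBraidFamily N T π) {k : ℕ} (hk : k + 1 < N) :
    Commute (π * aF T 0 N) (T k) :=
  (hT.semiconjBy hk).mul_left (hT.semiconjBy_aF hk le_rfl)

theorem commute_sq_rotation_mul_aF (hT : IsAffineBraidFamily N T π) {k : ℕ} (hk : k + 1 = N) :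
    Commute (π * aF T 0 k * (π * aF T 0 k)) (T k) := by
  subst hk
  have hrot : SemiconjBy π (aF T 1 k) (aF T 0 k) := semiconjBy_aF fun i hi ↦ by
    simpa [add_comm] using hT.semiconjBy (k := i) (by omega)
  have hshift : SemiconjBy (aF T 0 (k + 1)) (aF T 0 k) (aF T 1 k) := semiconjBy_aF fun i hi ↦ by
    simpa [add_comm] using hT.semiconjBy_aF (i := i) (by omega) le_rfl
  have hsplit : π * aF T 0 k * (π * aF T 0 k) = π * π * (aF T 1 k * aF T 0 k) := by
    rw [mul_assoc, ← mul_assoc (aF T 0 k), ← hrot.eq]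
    simp only [mul_assoc]
  have hfirst : SemiconjBy (aF T 1 k * aF T 0 k) (T k) (T 0) := by
    have hlast : aF T 0 (k + 1) = aF T 0 k * T k := by rw [aF_succ_right, zero_add]
    rw [SemiconjBy, mul_assoc, ← hlast, ← hshift.eq, aF_succ_left, zero_add, mul_assoc]
  rw [hsplit]
  exact (hT.semiconjBy_sq rfl).mul_left hfirst

end Monoid

variable {G : Type*} [Group G] {N : ℕ} {T : ℕ → G} {π : G}

theorem inv (hT : IsAffineBraidFamily N T π) : IsAffineBraidFamily N (fun k ↦ (T k)⁻¹) π where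
  commute hij hj := (hT.commute hij hj).inv_inv
  braid hi := by simpa [mul_assoc] using congrArg (·⁻¹) (hT.braid hi)
  semiconjBy hk := (hT.semiconjBy hk).inv_right
  semiconjBy_sq hk := (hT.semiconjBy_sq hk).inv_right

/-- The last Cherednik operator `Y_N = π T_0⁻¹ ⋯ T_{N-1}⁻¹` of an affine braid family, all
indices starting at `0`. -/
def cherednik (N : ℕ) (T : ℕ → G) (π : G) : G := π * aF (fun k ↦ (T k)⁻¹) 0 N

theorem commute_cherednik (hT : IsAffineBraidFamily N T π) {k : ℕ} (hk : k + 1 < N) :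
    Commute (T k) (cherednik N T π) := by
  simpa [cherednik] using (hT.inv.commute_rotation_mul_aF hk).inv_right.symm

theorem cherednik_mul (N : ℕ) (T : ℕ → G) (π : G) :
    cherednik (N + 1) T π * T N = π * aF (fun k ↦ (T k)⁻¹) 0 N := by
  simp [cherednik, aF_succ_right, mul_assoc]

theorem commute_cherednik_conj (hT : IsAffineBraidFamily N T π) {k : ℕ} (hk : k + 1 = N) :
    Commute (cherednik N T π) (T k * cherednik N T π * T k) := by
  subst hk
  have hsq := hT.inv.commute_sq_rotation_mul_aF rfl
  rw [← cherednik_mul] at hsq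
  refine mul_right_cancel (b := T k) ?_
  simpa only [mul_assoc] using (Commute.inv_right_iff.1 hsq).eq

end IsAffineBraidFamily

end BraidFamily

section Transport

variable {M : Type*} [Monoid M] {N : ℕ} {T : ℕ → M} {E : M}

/-- The sequence `D_i = T_i ⋯ T_{N-1} E T_{N-1} ⋯ T_i` obtained by carrying `E = D_N` down along
a family `T`. -/
def transport (T : ℕ → M) (N : ℕ) (E : M) (i : ℕ) : M :=
  aF T i (N - i) * E * dF T i (N - i)

theorem transport_self (T : ℕ → M) (N : ℕ) (E : M) : transport T N E N = E := by
  simp [transport, aF_zero, dF_zero]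

theorem transport_of_lt {i : ℕ} (hi : i < N) :
    transport T N E i = T i * transport T N E (i + 1) * T i := by
  obtain ⟨d, rfl⟩ := Nat.exists_eq_add_of_lt hi
  simp only [transport, show i + d + 1 - i = d + 1 by omega, show i + d + 1 - (i + 1) = d by omega,
    aF_succ_left, dF_succ_left, mul_assoc]

theorem transport_congr {T' : ℕ → M} (h : ∀ k < N, T k = T' k) {i : ℕ} (hi : i ≤ N) :
    transport T N E i = transport T' N E i := by
  rw [transport, transport, aF_congr fun k _ hk ↦ h k (by omega),
    dF_congr fun k _ hk ↦ h k (by omega)]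

theorem transport_smul {S : Type*} [SMul S M] [SMulCommClass S M M] [IsScalarTower S M M]
    (c : S) (i : ℕ) : transport T N (c • E) i = c • transport T N E i := by
  rw [transport, transport, mul_smul_comm, smul_mul_assoc]

theorem commute_conj_of_braid {a b e : M} (hab : a * b * a = b * a * b) (hae : Commute a e)
    (he : Commute (b * e * b) e) : Commute (a * (b * e * b) * a) (b * e * b) := by
  calc a * (b * e * b) * a * (b * e * b)
      = a * b * e * (b * a * b) * e * b := by simp only [mul_assoc]
    _ = a * b * (e * a) * b * (a * e) * b := by rw [← hab]; simp only [mul_assoc]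
    _ = a * b * a * e * b * e * (a * b) := by rw [← hae.eq]; simp only [mul_assoc, hae.eq]
    _ = b * a * (b * e * b * e) * (a * b) := by rw [hab]; simp only [mul_assoc]
    _ = b * a * e * b * e * (b * a * b) := by rw [he.eq]; simp only [mul_assoc]
    _ = b * (a * e) * b * (e * a) * b * a := by rw [← hab]; simp only [mul_assoc]
    _ = b * e * (a * b * a) * e * b * a := by rw [← hae.eq]; simp only [mul_assoc, hae.eq]
    _ = b * e * b * (a * (b * e * b) * a) := by rw [hab]; simp only [mul_assoc]

namespace IsBraidFamily

variable (hT : IsBraidFamily N T) (hTE : ∀ k, k + 1 < N → Commute (T k) E)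
include hT hTE

theorem commute_transport_of_lt {i k : ℕ} (hi : i ≤ N) (hk : k + 1 < i) :
    Commute (T k) (transport T N E i) := by
  induction hi using Nat.decreasingInduction with
  | self => simpa only [transport_self] using hTE k hk
  | of_succ i hi ih =>
    rw [transport_of_lt hi]
    exact ((hT.commute hk hi).mul_right (ih (by omega))).mul_right (hT.commute hk hi)

theorem commute_transport_succ (hE : ∀ k, k + 1 = N → Commute (T k * E * T k) E) {i : ℕ}
    (hi : i < N) : Commute (transport T N E i) (transport T N E (i + 1)) := by
  obtain ⟨j, hij⟩ : ∃ j, i + 1 = j := ⟨_, rfl⟩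
  have hj : j ≤ N := hij ▸ hi
  induction hj using Nat.decreasingInduction generalizing i with
  | self => simpa only [transport_of_lt hi, hij, transport_self] using hE i hij
  | of_succ j hj ih =>
    subst hij
    have hnext := ih hj rfl
    rw [transport_of_lt hj] at hnext
    rw [transport_of_lt hi, transport_of_lt hj]
    exact commute_conj_of_braid (hT.braid hj)
      (hT.commute_transport_of_lt hTE hj (Nat.lt_succ_self _)) hnext

theorem commute_transport (hE : ∀ k, k + 1 = N → Commute (T k * E * T k) E) {i j : ℕ}
    (hi : i ≤ N) (hj : j ≤ N) : Commute (transport T N E i) (transport T N E j) := by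
  wlog hij : i < j generalizing i j
  · obtain rfl | hji := (not_lt.1 hij).eq_or_lt
    · exact Commute.refl _
    · exact (this hj hi hji).symm
  obtain ⟨m, him⟩ : ∃ m, i + 1 = m := ⟨_, rfl⟩
  have hmj : m ≤ j := him ▸ hij
  induction hmj using Nat.decreasingInduction generalizing i with
  | self => exact him ▸ hT.commute_transport_succ hTE hE (by omega)
  | of_succ m hmj ih =>
    subst him
    have hTi := hT.commute_transport_of_lt hTE hj hmj
    rw [transport_of_lt (by omega)]
    exact (hTi.mul_left (ih (by omega) hmj rfl)).mul_left hTi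

end IsBraidFamily

end Transport

section RankOne

variable {A : Type*} [Ring A] {t y : Aˣ} {x h : A}

theorem mul_add_inv_mul_inv_of_inv_eq_sub {s : Aˣ} (hh : ∀ a, Commute h a)
    (hs : (↑s⁻¹ : A) = s - h) (ht : (↑t⁻¹ : A) = t - h) :
    (s * t + ↑t⁻¹ * ↑s⁻¹ : A) = t * s + ↑s⁻¹ * ↑t⁻¹ := by
  rw [hs, ht]
  simp only [sub_mul, mul_sub, (hh (s : A)).eq, (hh (t : A)).eq]
  abel

theorem sub_inv_mul_sub_inv_mul (hh : ∀ a, Commute h a) (ht : (↑t⁻¹ : A) = t - h)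
    (hy : Commute y (t * y * t)) :
    (y * t - ↑(t⁻¹ * (t * y * t)⁻¹) : A) * (y - ↑y⁻¹) * t =
      (↑(t * y * t) - ↑(t * y * t)⁻¹) * (y - ↑y⁻¹) := by
  set u := t * y * t with hu
  have hs : (↑(y * t * y⁻¹)⁻¹ : A) = ↑(y * t * y⁻¹) - h := by
    have hy_inv_mul : (h * y : A) * ↑y⁻¹ = h := Units.mul_inv_cancel_right h y
    rw [conj_inv, Units.val_mul, Units.val_mul, ht, mul_sub, sub_mul, ← (hh (y : A)).eq,
      hy_inv_mul, Units.val_mul, Units.val_mul]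
  have hinv : u⁻¹ = t⁻¹ * y⁻¹ * t⁻¹ := by simp [hu, mul_assoc]
  have huy : y * t * y * t = u * y := by rw [← hy.eq, hu]; simp only [mul_assoc]
  have huy_inv : u⁻¹ * y = (y * t * y⁻¹)⁻¹ * t⁻¹ := by
    rw [← hy.inv_right.eq, hinv]; group
  have huy_inv_conj : t⁻¹ * u⁻¹ * y * t = t⁻¹ * (y * t * y⁻¹)⁻¹ := by
    rw [mul_assoc t⁻¹, huy_inv]; group
  have huy_inv_inv : t⁻¹ * u⁻¹ * y⁻¹ * t = u⁻¹ * y⁻¹ := by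
    nth_rw 1 [mul_assoc t⁻¹, hy.inv_inv.symm.eq, hinv, hinv]; group
  calc (y * t - ↑(t⁻¹ * u⁻¹) : A) * (y - ↑y⁻¹) * t
      = ↑(y * t * y * t) + ↑(t⁻¹ * u⁻¹ * y⁻¹ * t)
          - (↑(y * t * y⁻¹) * t + ↑(t⁻¹ * u⁻¹ * y * t)) := by
        simp only [Units.val_mul]; noncomm_ring
    _ = ↑(u * y) + ↑(u⁻¹ * y⁻¹)
          - (t * ↑(y * t * y⁻¹) + ↑(y * t * y⁻¹)⁻¹ * ↑t⁻¹) := by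
        rw [huy, huy_inv_inv, huy_inv_conj, Units.val_mul t⁻¹,
          mul_add_inv_mul_inv_of_inv_eq_sub hh hs ht]
    _ = (u - ↑u⁻¹) * (y - ↑y⁻¹) := by
        rw [← Units.val_mul _ t⁻¹, ← huy_inv, hu]
        simp only [Units.val_mul]; noncomm_ring

theorem sub_inv_mul_mul (hyx : SemiconjBy (↑(y * t) : A) x (t * x * t)) :
    (y - ↑y⁻¹ : A) * t * x = t * x * t * (y * t - ↑(t⁻¹ * (t * y * t)⁻¹)) := by
  have hinv : (↑y⁻¹ * t * x : A) = t * x * t * ↑(t⁻¹ * (t * y * t)⁻¹) := by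
    have hback : (↑(y * t)⁻¹ * (t * x * t) : A) = x * ↑(y * t)⁻¹ := hyx.units_inv_symm_left.eq
    calc (↑y⁻¹ * t * x : A) = t * (↑(y * t)⁻¹ * (t * x * t)) * ↑t⁻¹ := by
          simp [mul_assoc]
      _ = t * x * t * ↑(t⁻¹ * (t * y * t)⁻¹) := by rw [hback]; simp [mul_assoc]
  calc (y - ↑y⁻¹ : A) * t * x = ↑(y * t) * x - ↑y⁻¹ * t * x := by
        rw [Units.val_mul]; noncomm_ring
    _ = t * x * t * (y * t - ↑(t⁻¹ * (t * y * t)⁻¹)) := by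
        rw [hyx.eq, hinv, Units.val_mul y, mul_sub]

theorem commute_conj_mul_sub_inv (hh : ∀ a, Commute h a) (ht : (↑t⁻¹ : A) = t - h)
    (hy : Commute y (t * y * t)) (hx : Commute x (t * x * t))
    (hyx : SemiconjBy (↑(y * t) : A) x (t * x * t)) :
    Commute (t * (x * (y - ↑y⁻¹)) * t : A) (x * (y - ↑y⁻¹)) := by
  have hpush := sub_inv_mul_mul hyx
  have hcancel := sub_inv_mul_sub_inv_mul hh ht hy
  set u := t * y * t with hu
  set v : A := y * t - ↑(t⁻¹ * u⁻¹) with hv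
  have htv : (t : A) * v = u - ↑u⁻¹ := by
    rw [hv, hu]; simp [mul_sub, mul_assoc]
  calc t * (x * (y - ↑y⁻¹)) * t * (x * (y - ↑y⁻¹))
      = t * x * ((y - ↑y⁻¹) * t * x) * (y - ↑y⁻¹) := by simp only [mul_assoc]
    _ = t * x * t * x * (t * v) * (y - ↑y⁻¹) := by rw [hpush]; simp only [mul_assoc]
    _ = x * (t * x * t) * (v * (y - ↑y⁻¹) * t) := by rw [← hx.eq, htv, hcancel, mul_assoc]
    _ = x * ((y - ↑y⁻¹) * t * x) * (y - ↑y⁻¹) * t := by rw [hpush]; simp only [mul_assoc]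
    _ = x * (y - ↑y⁻¹) * (t * (x * (y - ↑y⁻¹)) * t) := by simp only [mul_assoc]

namespace IsAffineBraidFamily

variable {N : ℕ} {T : ℕ → Aˣ} {π : Aˣ}

theorem commute_transport_cherednik (hT : IsAffineBraidFamily N (fun k ↦ (T k : A)) (π : A))
    (hh : ∀ a, Commute h a)
    (hquad : ∀ k, k + 1 = N → (↑(T k)⁻¹ : A) = T k - h)
    (hTx : ∀ k, k + 1 < N → Commute (T k : A) x)
    (hx : ∀ k, k + 1 = N → Commute x (T k * x * T k))
    (hπx : ∀ k, k + 1 = N → SemiconjBy (π : A) x (T k * x * T k)) {i j : ℕ} (hi : i ≤ N)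
    (hj : j ≤ N) :
    Commute (transport (fun k ↦ (T k : A)) N
        (x * (↑(cherednik N T π) - ↑(cherednik N T π)⁻¹)) i)
      (transport (fun k ↦ (T k : A)) N
        (x * (↑(cherednik N T π) - ↑(cherednik N T π)⁻¹)) j) := by
  have hTu := hT.units_of_val
  refine hT.toIsBraidFamily.commute_transport (fun k hk ↦ ?_) (fun k hk ↦ ?_) hi hj
  · have hTY := hTu.commute_cherednik hk
    exact (hTx k hk).mul_right
      (hTY.units_val.sub_right hTY.inv_right.units_val)
  · refine commute_conj_mul_sub_inv hh (hquad k hk) (hTu.commute_cherednik_conj hk) (hx k hk) ?_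
    subst hk
    have hTx_inv : Commute x (Units.coeHom A (aF (fun i ↦ (T i)⁻¹) 0 k)) := by
      rw [map_aF]
      refine commute_aF fun i hi ↦ (hTx (0 + i) (by omega)).symm.units_inv_right
    rw [cherednik_mul, Units.val_mul]
    exact (hπx k rfl).mul_left hTx_inv.symm

end IsAffineBraidFamily

end RankOne

section DemazureLusztig

variable {A : Type*} [CommRing A] [Algebra R A] {τ : Rˣ}

/-- `T` is the Demazure–Lusztig operator with parameter `τ` attached to the involution `s` and the
variable `a`, that is `T f = ((τ⁻¹ s(a) - τ a) s(f) + (τ - τ⁻¹) s(a) f) / (s(a) - a)`. The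
denominator is cleared and required to be regular, so that the equation determines `T`. -/
structure IsDemazureLusztig (τ : Rˣ) (s : A →ₐ[R] A) (a : A) (T : Module.End R A) : Prop where
  involutive : Function.Involutive s
  regular : IsLeftRegular (s a - a)
  sub_mul_apply (f : A) : (s a - a) * T f =
    ((↑τ⁻¹ : R) • s a - (τ : R) • a) * s f + ((τ : R) - ↑τ⁻¹) • (s a * f)

theorem isLeftRegular_map_of_involutive {s : A →ₐ[R] A} (hs : Function.Involutive s) {d : A}
    (hd : IsLeftRegular d) : IsLeftRegular (s d) := fun f g hfg ↦ by
  refine hs.injective (hd ?_)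
  simpa only [map_mul, hs d] using congrArg s hfg

namespace IsDemazureLusztig

variable {s s' : A →ₐ[R] A} {a a' : A} {T T' : Module.End R A}

theorem map_sub_mul_apply (hT : IsDemazureLusztig τ s a T) (φ : A →ₐ[R] A) (f : A) :
    (φ (s a) - φ a) * φ (T f) =
      (algebraMap R A ↑τ⁻¹ * φ (s a) - algebraMap R A τ * φ a) * φ (s f) +
        (algebraMap R A τ - algebraMap R A ↑τ⁻¹) * (φ (s a) * φ f) := by
  simpa [Algebra.smul_def] using congrArg φ (hT.sub_mul_apply f)

theorem map_mul_of_fixed (hT : IsDemazureLusztig τ s a T) {g : A} (hg : s g = g) (f : A) :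
    T (g * f) = g * T f := by
  apply hT.regular
  have hgf := hT.map_sub_mul_apply (.id R A) (g * f)
  have hf := hT.map_sub_mul_apply (.id R A) f
  simp only [AlgHom.id_apply, map_mul, hg] at hgf hf ⊢
  linear_combination hgf - g * hf

theorem map_comm (hT : IsDemazureLusztig τ s a T) (hT' : IsDemazureLusztig τ s' a' T')
    {φ : A →ₐ[R] A} (hφ : ∀ f, φ (s f) = s' (φ f)) {z : Rˣ} (hz : φ a = (z : R) • a') (f : A) :
    φ (T f) = T' (φ f) := by
  apply hT'.regular
  have hzu : IsUnit (algebraMap R A z) := z.isUnit.map _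
  apply hzu.isRegular.left
  have hf := hT.map_sub_mul_apply φ f
  have hφf := hT'.map_sub_mul_apply (.id R A) (φ f)
  simp only [AlgHom.id_apply, hφ, hz, Algebra.smul_def, map_mul, AlgHom.commutes] at hf hφf ⊢
  linear_combination hf - algebraMap R A z * hφf

theorem commute (hT : IsDemazureLusztig τ s a T) (hT' : IsDemazureLusztig τ s' a' T')
    (hs' : ∀ f, s' (T f) = T (s' f)) (ha' : s a' = a') (hsa' : s (s' a') = s' a') :
    Commute T T' := by
  refine LinearMap.ext fun f ↦ hT'.regular ?_
  have hpull : (s' a' - a') * T (T' f) = T ((s' a' - a') * T' f) :=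
    (hT.map_mul_of_fixed (by rw [map_sub, ha', hsa']) _).symm
  have hfix : s ((↑τ⁻¹ : R) • s' a' - (τ : R) • a') = (↑τ⁻¹ : R) • s' a' - (τ : R) • a' := by
    rw [map_sub, map_smul, map_smul, ha', hsa']
  change (s' a' - a') * T (T' f) = (s' a' - a') * T' (T f)
  rw [hpull, hT'.sub_mul_apply, hT'.sub_mul_apply, map_add, map_smul, hT.map_mul_of_fixed hfix,
    hT.map_mul_of_fixed hsa', hs']

theorem mul_add_smul_one (hT : IsDemazureLusztig τ s a T) :
    T * (T + ((↑τ⁻¹ : R) - τ) • 1) = 1 := by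
  refine LinearMap.ext fun f ↦ hT.regular (hT.regular ?_)
  have hτ : algebraMap R A τ * algebraMap R A ↑τ⁻¹ = 1 := by simp [← map_mul]
  have hf := hT.map_sub_mul_apply (.id R A) f
  have hsf := hT.map_sub_mul_apply s f
  have hTf := hT.map_sub_mul_apply (.id R A) (T f)
  simp only [Module.End.mul_apply, LinearMap.add_apply, LinearMap.smul_apply,
    Module.End.one_apply, map_add, map_smul]
  rw [Algebra.smul_def, map_sub]
  simp only [AlgHom.id_apply, hT.involutive _] at hf hsf hTf
  set p := algebraMap R A τ
  set r := algebraMap R A ↑τ⁻¹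
  linear_combination (s a - a) * hTf - (r * s a - p * a) * hsf + (p - r) * a * hf
    + (s a - a) ^ 2 * f * hτ

/-- The quadratic relation `(T - τ) (T + τ⁻¹) = 0` makes `T` invertible, with inverse
`T + τ⁻¹ - τ`. -/
def unit (hT : IsDemazureLusztig τ s a T) : (Module.End R A)ˣ where
  val := T
  inv := T + ((↑τ⁻¹ : R) - τ) • 1
  val_inv := hT.mul_add_smul_one
  inv_val := by rw [add_mul, smul_one_mul, ← mul_smul_one, ← mul_add, hT.mul_add_smul_one]

theorem mul_mulLeft_mul (hT : IsDemazureLusztig τ s a T) {b : A} (hab : a * b = 1) :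
    T * LinearMap.mulLeft R (s b) * T = LinearMap.mulLeft R b := by
  refine LinearMap.ext fun f ↦ hT.regular (hT.regular ?_)
  have hτ : algebraMap R A τ * algebraMap R A ↑τ⁻¹ = 1 := by simp [← map_mul]
  have hsab : s a * s b = 1 := by rw [← map_mul, hab, map_one]
  have hf := hT.map_sub_mul_apply (.id R A) f
  have hsf := hT.map_sub_mul_apply s f
  have hbTf := hT.map_sub_mul_apply (.id R A) (s b * T f)
  simp only [AlgHom.id_apply, hT.involutive _, Module.End.mul_apply, LinearMap.mulLeft_apply,
    map_mul] at *
  set p := algebraMap R A τ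
  set r := algebraMap R A ↑τ⁻¹
  linear_combination (s a - a) * hbTf - (r * s a - p * a) * b * hsf
    + (p - r) * s a * s b * hf
    + ((2 * s a - a) * f - p ^ 2 * s a * f
      - (r * s a - p * a) * (r * f + (p - r) * s f)) * hab
    + (p - r) * ((r * s a - p * a) * s f + (p - r) * s a * f) * hsab
    + (s a ^ 2 * b + a - 2 * s a) * f * hτ

section Braid

variable {b c : A} (hT : IsDemazureLusztig τ s a T) (hT' : IsDemazureLusztig τ s' b T')
  (hab : s a = b) (hbc : s' b = c) (ha : s' a = a) (hc : s c = c)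
include hT hT' hab hbc ha hc

-- Expanding both sides of the braid relation over a common denominator leaves a comparison of
-- coefficients of the translates of `f` under the group generated by `s` and `s'`.
theorem sub_mul_mul_mul_apply (f : A) :
    (b - a) ^ 2 * (c - b) * (c - a) * T (T' (T f)) =
      ((↑τ⁻¹ : R) • b - (τ : R) • a) * ((↑τ⁻¹ : R) • c - (τ : R) • a) * (b - a) *
        (((↑τ⁻¹ : R) • c - (τ : R) • b) * s (s' (s f)) + ((τ : R) - ↑τ⁻¹) • (c * s (s' f))) -
      ((τ : R) - ↑τ⁻¹) • (((↑τ⁻¹ : R) • b - (τ : R) • a) * c * (c - b) *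
        (((↑τ⁻¹ : R) • a - (τ : R) • b) * f + ((τ : R) - ↑τ⁻¹) • (a * s f))) +
      ((τ : R) - ↑τ⁻¹) • (((↑τ⁻¹ : R) • c - (τ : R) • b) * b * (b - a) *
        (((↑τ⁻¹ : R) • c - (τ : R) • a) * s' (s f) + ((τ : R) - ↑τ⁻¹) • (c * s' f))) +
      ((τ : R) - ↑τ⁻¹) ^ 2 • (b * c * (c - a) *
        (((↑τ⁻¹ : R) • b - (τ : R) • a) * s f + ((τ : R) - ↑τ⁻¹) • (b * f))) := by
  have hba : s b = a := hab ▸ hT.involutive a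
  have hf := hT.map_sub_mul_apply (.id R A) f
  have hf_s := hT.map_sub_mul_apply s f
  have hf_s' := hT.map_sub_mul_apply s' f
  have hf_ss' := hT.map_sub_mul_apply (s.comp s') f
  have hTf := hT'.map_sub_mul_apply (.id R A) (T f)
  have hTf_s := hT'.map_sub_mul_apply s (T f)
  have hT'Tf := hT.map_sub_mul_apply (.id R A) (T' (T f))
  simp only [AlgHom.id_apply, AlgHom.comp_apply, hT.involutive f, hab, hba, hbc, ha, hc,
    Algebra.smul_def, map_sub, map_pow] at *
  set p := algebraMap R A τ
  set r := algebraMap R A ↑τ⁻¹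
  linear_combination
    (b - a) * (c - b) * (c - a) * hT'Tf
    + (r * b - p * a) * (b - a) * (c - b) * hTf_s
    + (p - r) * b * (b - a) * (c - a) * hTf
    + (r * b - p * a) * (r * c - p * a) * (b - a) * hf_ss'
    - (r * b - p * a) * (p - r) * c * (c - b) * hf_s
    + (p - r) * b * (r * c - p * b) * (b - a) * hf_s'
    + (p - r) * b * (p - r) * c * (c - a) * hf

theorem sub_mul_mul_mul_apply' (f : A) :
    (b - a) * (c - b) ^ 2 * (c - a) * T' (T (T' f)) =
      ((↑τ⁻¹ : R) • c - (τ : R) • b) * ((↑τ⁻¹ : R) • c - (τ : R) • a) * (c - b) *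
        (((↑τ⁻¹ : R) • b - (τ : R) • a) * s' (s (s' f)) + ((τ : R) - ↑τ⁻¹) • (b * s' (s f))) -
      ((τ : R) - ↑τ⁻¹) • (((↑τ⁻¹ : R) • c - (τ : R) • b) * c * (b - a) *
        (((↑τ⁻¹ : R) • b - (τ : R) • c) * f + ((τ : R) - ↑τ⁻¹) • (b * s' f))) +
      ((τ : R) - ↑τ⁻¹) • (((↑τ⁻¹ : R) • b - (τ : R) • a) * c * (c - b) *
        (((↑τ⁻¹ : R) • c - (τ : R) • a) * s (s' f) + ((τ : R) - ↑τ⁻¹) • (c * s f))) +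
      ((τ : R) - ↑τ⁻¹) ^ 2 • (b * c * (c - a) *
        (((↑τ⁻¹ : R) • c - (τ : R) • b) * s' f + ((τ : R) - ↑τ⁻¹) • (c * f))) := by
  have hba : s b = a := hab ▸ hT.involutive a
  have hcb : s' c = b := hbc ▸ hT'.involutive b
  have hf := hT'.map_sub_mul_apply (.id R A) f
  have hf_s := hT'.map_sub_mul_apply s f
  have hf_s' := hT'.map_sub_mul_apply s' f
  have hf_s's := hT'.map_sub_mul_apply (s'.comp s) f
  have hT'f := hT.map_sub_mul_apply (.id R A) (T' f)
  have hT'f_s' := hT.map_sub_mul_apply s' (T' f)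
  have hTT'f := hT'.map_sub_mul_apply (.id R A) (T (T' f))
  simp only [AlgHom.id_apply, AlgHom.comp_apply, hT'.involutive f, hab, hba, hbc, hcb, ha, hc,
    Algebra.smul_def, map_sub, map_pow] at *
  set p := algebraMap R A τ
  set r := algebraMap R A ↑τ⁻¹
  linear_combination
    (b - a) * (c - b) * (c - a) * hTT'f
    + (r * c - p * b) * (b - a) * (c - b) * hT'f_s'
    + (p - r) * c * (c - b) * (c - a) * hT'f
    + (r * c - p * b) * (r * c - p * a) * (c - b) * hf_s's
    - (r * c - p * b) * (p - r) * c * (b - a) * hf_s'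
    + (p - r) * c * (r * b - p * a) * (c - b) * hf_s
    + (p - r) * c * (p - r) * b * (c - a) * hf

theorem braid (hss' : ∀ f, s (s' (s f)) = s' (s (s' f))) : T * T' * T = T' * T * T' := by
  have hba : IsLeftRegular (b - a) := hab ▸ hT.regular
  have hcb : IsLeftRegular (c - b) := hbc ▸ hT'.regular
  have hca : IsLeftRegular (c - a) := by
    simpa only [map_sub, ha, hbc] using isLeftRegular_map_of_involutive hT'.involutive hba
  refine LinearMap.ext fun f ↦ ((hba.pow 2).mul (hcb.pow 2)).mul hca ?_
  have hleft := hT.sub_mul_mul_mul_apply hT' hab hbc ha hc f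
  have hright := hT.sub_mul_mul_mul_apply' hT' hab hbc ha hc f
  simp only [Module.End.mul_apply, Algebra.smul_def, map_sub, map_pow, hss'] at hleft hright ⊢
  linear_combination (c - b) * hleft - (b - a) * hright

end Braid

end IsDemazureLusztig

end DemazureLusztig

section Laurent

open AddMonoidAlgebra

theorem isLeftRegular_single_sub_single {G : Type*} [AddCommGroup G] {a b : G}
    (hab : ¬IsOfFinAddOrder (a - b)) :
    IsLeftRegular (single a 1 - single b 1 : AddMonoidAlgebra R G) := by
  refine isLeftRegular_of_non_zero_divisor _ fun f hf ↦ ?_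
  have hshift (x : G) : f.coeff (x + (a - b)) = f.coeff x := by
    have hcoeff := congrArg (fun g ↦ g.coeff (x + a)) hf
    rw [sub_mul, coeff_sub, Finsupp.sub_apply, coeff_single_mul_apply, coeff_single_mul_apply,
      one_mul, one_mul, coeff_zero, Finsupp.zero_apply, sub_eq_zero] at hcoeff
    rw [show x + (a - b) = -b + (x + a) by abel, ← hcoeff]
    congr 1; abel
  by_contra hne
  obtain ⟨x, hx⟩ := Finsupp.ne_iff.1 (coeff_eq_zero.not.2 hne)
  have hmem (m : ℕ) : x + m • (a - b) ∈ f.coeff.support := by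
    induction m with
    | zero => simpa using hx
    | succ m ih => simpa [succ_nsmul, ← add_assoc, hshift] using ih
  refine Set.infinite_of_injective_forall_mem (f := fun m : ℕ ↦ x + m • (a - b)) ?_ hmem
    f.coeff.support.finite_toSet
  exact (add_right_injective x).comp (injective_nsmul_iff_not_isOfFinAddOrder.2 hab)

theorem isLeftRegular_Xel_sub_Xel {i j : Fin n} (hij : i ≠ j) :
    IsLeftRegular (Xel i - Xel j : Laur R n) := by
  refine isLeftRegular_single_sub_single (not_isOfFinAddOrder_of_isAddTorsionFree ?_)
  simpa [sub_eq_zero, Finsupp.single_left_inj] using hij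

theorem Xel_mul_XinvEl (i : Fin n) : (Xel i * XinvEl i : Laur R n) = 1 := by
  simp [Xel, XinvEl, mono, single_mul_single, one_def]

theorem algHom_ext_Xel {A : Type*} [Semiring A] [Algebra R A] {φ ψ : Laur R n →ₐ[R] A}
    (h : ∀ i, φ (Xel i) = ψ (Xel i)) : φ = ψ := by
  refine algHom_ext' (Finsupp.mulHom_ext' fun i ↦ ?_) (Subsingleton.elim _ _)
  exact MonoidHom.ext_mint (h i)

/-- The algebra endomorphism `X_i ↦ c_i X_{σ i}` of the Laurent polynomial ring, a common form for
the permutations of the variables and the operator `π⁻¹`. -/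
def monomialMap (c : Fin n → Rˣ) (σ : Equiv.Perm (Fin n)) : Laur R n →ₐ[R] Laur R n :=
  AddMonoidAlgebra.lift R (Laur R n) (Fin n →₀ ℤ)
    { toFun := fun a ↦
        mono (Finsupp.equivMapDomain σ a.toAdd) ↑(∏ i, c i ^ a.toAdd i)
      map_one' := by
        simp [mono, one_def]
      map_mul' := fun a b ↦ by
        simp [mono, single_mul_single, zpow_add, Finset.prod_mul_distrib,
          Finsupp.equivMapDomain_eq_mapDomain, Finsupp.mapDomain_add] }

theorem monomialMap_mono (c : Fin n → Rˣ) (σ : Equiv.Perm (Fin n)) (a : Fin n →₀ ℤ) (r : R) :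
    monomialMap c σ (mono a r) = (↑(∏ i, c i ^ a i) : R) • mono (Finsupp.equivMapDomain σ a) r := by
  simp [monomialMap, mono, lift_single, smul_single, mul_comm]

theorem monomialMap_Xel (c : Fin n → Rˣ) (σ : Equiv.Perm (Fin n)) (i : Fin n) :
    monomialMap c σ (Xel i) = (c i : R) • Xel (σ i) := by
  rw [Xel, monomialMap_mono, Finset.prod_eq_single i] <;>
    simp +contextual [Xel, Finsupp.equivMapDomain_single]

theorem monomialMap_XinvEl (c : Fin n → Rˣ) (σ : Equiv.Perm (Fin n)) (i : Fin n) :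
    monomialMap c σ (XinvEl i) = (↑(c i)⁻¹ : R) • XinvEl (σ i) := by
  rw [XinvEl, monomialMap_mono, Finset.prod_eq_single i] <;>
    simp +contextual [-Finsupp.single_neg, XinvEl, Finsupp.equivMapDomain_single]

theorem monomialMap_monomialMap (c d : Fin n → Rˣ) (σ ρ : Equiv.Perm (Fin n)) (f : Laur R n) :
    monomialMap c σ (monomialMap d ρ f) = monomialMap (d * c ∘ ρ) (σ * ρ) f := by
  refine DFunLike.congr_fun (algHom_ext_Xel (φ := (monomialMap c σ).comp (monomialMap d ρ))
    fun i ↦ ?_) f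
  simp [monomialMap_Xel, mul_smul]

theorem monomialMap_one_one : (monomialMap 1 1 : Laur R n →ₐ[R] Laur R n) = .id R _ :=
  algHom_ext_Xel fun i ↦ by simp [monomialMap_Xel]

theorem monomialMap_swap {c : Fin n → Rˣ} {i j : Fin n} (hc : c i = c j)
    (σ : Equiv.Perm (Fin n)) (f : Laur R n) :
    monomialMap c σ (monomialMap 1 (Equiv.swap i j) f) =
      monomialMap 1 (Equiv.swap (σ i) (σ j)) (monomialMap c σ f) := by
  have hc_swap : c ∘ Equiv.swap i j = c := by
    funext l
    rw [Function.comp_apply, Equiv.swap_apply_def]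
    split_ifs <;> simp_all
  rw [monomialMap_monomialMap, monomialMap_monomialMap, hc_swap, Equiv.mul_swap_eq_swap_mul,
    one_mul, Pi.one_comp, mul_one]

namespace IsDemazureLusztig

variable {τ : Rˣ} {i j k l : Fin n} {T T' : Module.End R (Laur R n)}

theorem of_swap (hij : i ≠ j)
    (hT : ∀ f, (Xel j - Xel i) * T f = ((↑τ⁻¹ : R) • Xel j - (τ : R) • Xel i) *
      monomialMap 1 (Equiv.swap i j) f + ((τ : R) - ↑τ⁻¹) • (Xel j * f)) :
    IsDemazureLusztig τ (monomialMap 1 (Equiv.swap i j)) (Xel i) T where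
  involutive f := by
    rw [monomialMap_monomialMap, Pi.one_comp, mul_one, Equiv.swap_mul_self,
      monomialMap_one_one, AlgHom.id_apply]
  regular := by
    simpa [monomialMap_Xel] using isLeftRegular_Xel_sub_Xel (R := R) hij.symm
  sub_mul_apply f := by simpa [monomialMap_Xel] using hT f

theorem semiconjBy_monomialMap {c : Fin n → Rˣ} {σ : Equiv.Perm (Fin n)}
    (hT : IsDemazureLusztig τ (monomialMap 1 (Equiv.swap i j)) (Xel i) T)
    (hT' : IsDemazureLusztig τ (monomialMap 1 (Equiv.swap (σ i) (σ j))) (Xel (σ i)) T')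
    (hc : c i = c j) : SemiconjBy (monomialMap c σ).toLinearMap T T' :=
  LinearMap.ext <| hT.map_comm hT' (monomialMap_swap hc σ) (monomialMap_Xel c σ i)

theorem commute_of_swap_disjoint
    (hT : IsDemazureLusztig τ (monomialMap 1 (Equiv.swap i j)) (Xel i) T)
    (hT' : IsDemazureLusztig τ (monomialMap 1 (Equiv.swap k l)) (Xel k) T')
    (hik : i ≠ k) (hil : i ≠ l) (hjk : j ≠ k) (hjl : j ≠ l) : Commute T T' := by
  have hi : Equiv.swap k l i = i := Equiv.swap_apply_of_ne_of_ne hik hil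
  have hj : Equiv.swap k l j = j := Equiv.swap_apply_of_ne_of_ne hjk hjl
  refine hT.commute hT' (LinearMap.congr_fun
    (hT.semiconjBy_monomialMap (c := 1) (σ := Equiv.swap k l) (by rwa [hi, hj]) rfl)) ?_ ?_
  · simp [monomialMap_Xel, Equiv.swap_apply_of_ne_of_ne hik.symm hjk.symm]
  · simp [monomialMap_Xel, Equiv.swap_apply_of_ne_of_ne hil.symm hjl.symm]

theorem braid_of_swap
    (hT : IsDemazureLusztig τ (monomialMap 1 (Equiv.swap i j)) (Xel i) T)
    (hT' : IsDemazureLusztig τ (monomialMap 1 (Equiv.swap j k)) (Xel j) T')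
    (hij : i ≠ j) (hik : i ≠ k) (hjk : j ≠ k) : T * T' * T = T' * T * T' := by
  have hbraid : Equiv.swap i j * (Equiv.swap j k * Equiv.swap i j) =
      Equiv.swap j k * (Equiv.swap i j * Equiv.swap j k) := by
    rw [← mul_assoc, ← mul_assoc, Equiv.swap_mul_swap_mul_swap hij hik, Equiv.swap_comm i j,
      Equiv.swap_comm j k, Equiv.swap_mul_swap_mul_swap hjk.symm hik.symm, Equiv.swap_comm]
  refine hT.braid (c := Xel k) hT' ?_ ?_ ?_ ?_ fun f ↦ ?_
  · simp [monomialMap_Xel]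
  · simp [monomialMap_Xel]
  · simp [monomialMap_Xel, Equiv.swap_apply_of_ne_of_ne hij hik]
  · simp [monomialMap_Xel, Equiv.swap_apply_of_ne_of_ne hik.symm hjk.symm]
  · simp only [monomialMap_monomialMap, hbraid, Pi.one_comp, mul_one]

theorem mul_mulLeft_XinvEl_mul
    (hT : IsDemazureLusztig τ (monomialMap 1 (Equiv.swap i j)) (Xel i) T) :
    T * LinearMap.mulLeft R (XinvEl j) * T = LinearMap.mulLeft R (XinvEl i) := by
  have hj : monomialMap 1 (Equiv.swap i j) (XinvEl i) = (XinvEl j : Laur R n) := by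
    simp [monomialMap_XinvEl]
  rw [← hj, hT.mul_mulLeft_mul (Xel_mul_XinvEl i)]

theorem commute_mulLeft_XinvEl
    (hT : IsDemazureLusztig τ (monomialMap 1 (Equiv.swap i j)) (Xel i) T)
    (hik : i ≠ k) (hjk : j ≠ k) : Commute T (LinearMap.mulLeft R (XinvEl k)) := by
  refine LinearMap.ext fun f ↦ hT.map_mul_of_fixed ?_ f
  simp [monomialMap_XinvEl, Equiv.swap_apply_of_ne_of_ne hik.symm hjk.symm]

end IsDemazureLusztig

section CyclicShift

variable {N : ℕ} {q τ : Rˣ}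

/-- The operator `π⁻¹` of the theorem as an algebra endomorphism: `X_0 ↦ q X_N` and
`X_{k+1} ↦ X_k`. -/
def cyclicShift (q : Rˣ) : Laur R (N + 1) →ₐ[R] Laur R (N + 1) :=
  monomialMap (Function.update 1 0 q) (finRotate (N + 1)).symm

theorem finRotate_symm_zero : (finRotate (N + 1)).symm 0 = Fin.last N := by
  rw [Equiv.symm_apply_eq, finRotate_last]

theorem finRotate_symm_succ (k : Fin N) : (finRotate (N + 1)).symm k.succ = k.castSucc := by
  rw [Equiv.symm_apply_eq, finRotate_apply, Fin.coeSucc_eq_succ]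

theorem semiconjBy_cyclicShift_mulLeft_XinvEl (k : Fin N) :
    SemiconjBy (cyclicShift q).toLinearMap (LinearMap.mulLeft R (XinvEl k.succ))
      (LinearMap.mulLeft R (XinvEl k.castSucc)) := by
  refine LinearMap.ext fun f ↦ ?_
  have hX : cyclicShift q (XinvEl k.succ) = (XinvEl k.castSucc : Laur R (N + 1)) := by
    simp [cyclicShift, monomialMap_XinvEl, finRotate_symm_succ, -finRotate_symm_apply]
  simp [hX]

theorem semiconjBy_cyclicShift_mul_cyclicShift {T T' : Module.End R (Laur R (N + 2))}
    (hT : IsDemazureLusztig τ (monomialMap 1 (Equiv.swap 0 1)) (Xel 0) T)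
    (hT' : IsDemazureLusztig τ
      (monomialMap 1 (Equiv.swap (Fin.last N).castSucc (Fin.last N).succ))
      (Xel (Fin.last N).castSucc) T') :
    SemiconjBy ((cyclicShift q).toLinearMap * (cyclicShift q).toLinearMap) T T' := by
  set σ := (finRotate (N + 2)).symm
  let c : Fin (N + 2) → Rˣ := Function.update 1 0 q
  have hlast : σ (Fin.last (N + 1)) = (Fin.last N).castSucc := finRotate_symm_succ (Fin.last N)
  have hzero : σ 0 = Fin.last (N + 1) := finRotate_symm_zero
  have hone : σ 1 = 0 := finRotate_symm_succ 0
  have hsq : (cyclicShift q : Laur R (N + 2) →ₐ[R] _).toLinearMap *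
      (cyclicShift q).toLinearMap = (monomialMap (c * c ∘ σ) (σ * σ)).toLinearMap :=
    LinearMap.ext (monomialMap_monomialMap c c σ σ)
  have hc : (c * c ∘ σ) 0 = (c * c ∘ σ) 1 := by
    have hc_last : c (Fin.last (N + 1)) = 1 := Function.update_of_ne Fin.last_pos.ne' _ _
    have hc_one : c 1 = 1 := Function.update_of_ne one_ne_zero _ _
    rw [Pi.mul_apply, Pi.mul_apply, Function.comp_apply, Function.comp_apply, hone, hzero,
      hc_last, hc_one, mul_comm]
  rw [hsq]
  refine hT.semiconjBy_monomialMap ?_ hc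
  rw [Equiv.Perm.mul_apply, Equiv.Perm.mul_apply, hone, hzero, hlast]
  exact hT'

theorem isAffineBraidFamily_of_isDemazureLusztig {T : ℕ → Module.End R (Laur R (N + 1))}
    (hT : ∀ k : Fin N, IsDemazureLusztig τ (monomialMap 1 (Equiv.swap k.castSucc k.succ))
      (Xel k.castSucc) (T k)) :
    IsAffineBraidFamily N T (cyclicShift q).toLinearMap where
  commute {i j} hij hj := by
    have hi := hT ⟨i, by omega⟩
    have hj := hT ⟨j, hj⟩
    refine hi.commute_of_swap_disjoint hj ?_ ?_ ?_ ?_ <;> simp only [ne_eq, Fin.ext_iff,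
      Fin.val_castSucc, Fin.val_succ] <;> omega
  braid {i} hi := by
    have h := hT ⟨i, by omega⟩
    have h' := hT ⟨i + 1, hi⟩
    refine h.braid_of_swap h' ?_ ?_ ?_ <;> simp only [ne_eq, Fin.ext_iff, Fin.val_castSucc,
      Fin.val_succ] <;> omega
  semiconjBy {k} hk := by
    let k₀ : Fin N := ⟨k, by omega⟩
    let k₁ : Fin N := ⟨k + 1, hk⟩
    have h : IsDemazureLusztig τ (monomialMap 1 (Equiv.swap k₀.succ k₁.succ)) (Xel k₀.succ)
      (T (k + 1)) := hT k₁
    refine h.semiconjBy_monomialMap ?_ ?_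
    · rw [finRotate_symm_succ, finRotate_symm_succ]
      exact hT k₀
    · simp
  semiconjBy_sq {k} hk := by
    subst hk
    exact semiconjBy_cyclicShift_mul_cyclicShift (hT 0) (hT (Fin.last k))

theorem exists_cherednik_eq {T : ℕ → Module.End R (Laur R (N + 1))}
    (hT : ∀ k : Fin N, IsDemazureLusztig τ (monomialMap 1 (Equiv.swap k.castSucc k.succ))
      (Xel k.castSucc) (T k)) {Y : (Module.End R (Laur R (N + 1)))ˣ}
    (hY : (Y : Module.End R (Laur R (N + 1))) =
      (cyclicShift q).toLinearMap * aF (fun k ↦ T k + ((↑τ⁻¹ : R) - τ) • 1) 0 N) :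
    ∃ (u : ℕ → (Module.End R (Laur R (N + 1)))ˣ) (π : (Module.End R (Laur R (N + 1)))ˣ),
      (∀ k < N, (u k : Module.End R (Laur R (N + 1))) = T k ∧
        (↑(u k)⁻¹ : Module.End R (Laur R (N + 1))) = T k + ((↑τ⁻¹ : R) - τ) • 1) ∧
      (π : Module.End R (Laur R (N + 1))) = (cyclicShift q).toLinearMap ∧
      IsAffineBraidFamily.cherednik N u π = Y := by
  let u (k : ℕ) : (Module.End R (Laur R (N + 1)))ˣ := if hk : k < N then (hT ⟨k, hk⟩).unit else 1
  have hu : ∀ k < N, (u k : Module.End R (Laur R (N + 1))) = T k ∧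
      (↑(u k)⁻¹ : Module.End R (Laur R (N + 1))) = T k + ((↑τ⁻¹ : R) - τ) • 1 := fun k hk ↦ by
    simp only [u, dif_pos hk]
    exact ⟨rfl, rfl⟩
  have hprod : (↑(aF (fun k ↦ (u k)⁻¹) 0 N) : Module.End R (Laur R (N + 1))) =
      aF (fun k ↦ T k + ((↑τ⁻¹ : R) - τ) • 1) 0 N :=
    (map_aF (Units.coeHom _) _ 0 N).trans <| aF_congr fun k _ hk ↦ (hu k (by omega)).2
  refine ⟨u, Y * (aF (fun k ↦ (u k)⁻¹) 0 N)⁻¹, hu, ?_, inv_mul_cancel_right _ _⟩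
  rw [Units.val_mul, Units.mul_inv_eq_iff_eq_mul, hY, hprod]

/-- The `q`-Dunkl operators `D_0, …, D_N` built from the invertible operator `Y = Y_N`, without
the scalar factor `(q - q⁻¹)⁻¹`. -/
def dunkl (T : ℕ → Module.End R (Laur R (N + 1))) (Y : (Module.End R (Laur R (N + 1)))ˣ) :
    ℕ → Module.End R (Laur R (N + 1)) :=
  transport T N (LinearMap.mulLeft R (XinvEl (Fin.last N)) *
    ((Y : Module.End R (Laur R (N + 1))) - (↑Y⁻¹ : Module.End R (Laur R (N + 1)))))

theorem commute_dunkl {T : ℕ → Module.End R (Laur R (N + 1))}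
    (hT : ∀ k : Fin N, IsDemazureLusztig τ (monomialMap 1 (Equiv.swap k.castSucc k.succ))
      (Xel k.castSucc) (T k)) {Y : (Module.End R (Laur R (N + 1)))ˣ}
    (hY : (Y : Module.End R (Laur R (N + 1))) =
      (cyclicShift q).toLinearMap * aF (fun k ↦ T k + ((↑τ⁻¹ : R) - τ) • 1) 0 N)
    {i j : ℕ} (hi : i ≤ N) (hj : j ≤ N) : Commute (dunkl T Y i) (dunkl T Y j) := by
  obtain ⟨u, π, hu, hπ, rfl⟩ := exists_cherednik_eq hT hY
  have hval (k : ℕ) (hk : k < N) : T k = u k := (hu k hk).1.symm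
  have hDL (k : Fin N) : IsDemazureLusztig τ (monomialMap 1 (Equiv.swap k.castSucc k.succ))
      (Xel k.castSucc) (u k) := hval k k.2 ▸ hT k
  have hbraid : IsAffineBraidFamily N
      (fun k ↦ (u k : Module.End R (Laur R (N + 1)))) (π : Module.End R (Laur R (N + 1))) :=
    hπ ▸ isAffineBraidFamily_of_isDemazureLusztig hDL
  have hlast {k : ℕ} (hk : k + 1 = N) : (⟨k, by omega⟩ : Fin N).succ = Fin.last N :=
    Fin.ext hk
  have hconj {k : ℕ} (hk : k + 1 = N) :
      (u k : Module.End R (Laur R (N + 1))) * LinearMap.mulLeft R (XinvEl (Fin.last N)) *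
        (u k : Module.End R (Laur R (N + 1))) =
      LinearMap.mulLeft R (XinvEl (⟨k, by omega⟩ : Fin N).castSucc) := by
    rw [← hlast hk]
    exact (hDL ⟨k, by omega⟩).mul_mulLeft_XinvEl_mul
  rw [dunkl, transport_congr hval hi, transport_congr hval hj]
  refine hbraid.commute_transport_cherednik (h := -(((↑τ⁻¹ : R) - τ) • 1))
    (fun a ↦ ((Commute.one_left a).smul_left _).neg_left) (fun k hk ↦ ?_) (fun k hk ↦ ?_)
    (fun k hk ↦ ?_) (fun k hk ↦ ?_) hi hj
  · rw [(hu k (by omega)).2, hval k (by omega), sub_neg_eq_add]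
  · refine (hDL ⟨k, by omega⟩).commute_mulLeft_XinvEl ?_ ?_ <;>
      simp only [ne_eq, Fin.ext_iff, Fin.val_castSucc, Fin.val_succ, Fin.val_last] <;> omega
  · rw [hconj hk]
    exact LinearMap.ext fun f ↦ mul_left_comm _ _ _
  · rw [hconj hk, hπ, ← hlast hk]
    exact semiconjBy_cyclicShift_mulLeft_XinvEl _

end CyclicShift

theorem eq_monomialMap_of_apply_mono {c : Fin n → Rˣ} {σ : Equiv.Perm (Fin n)}
    {φ : Module.End R (Laur R n)}
    (hφ : ∀ a r, φ (mono a r) =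
      (↑(∏ i, c i ^ a i) : R) • mono (Finsupp.equivMapDomain σ a) r) :
    φ = (monomialMap c σ).toLinearMap :=
  lhom_ext' fun a ↦ LinearMap.ext fun r ↦ (hφ a r).trans (monomialMap_mono c σ a r).symm

theorem prod_update_one_zpow [NeZero n] (q : Rˣ) (a : Fin n →₀ ℤ) :
    ∏ i, (Function.update 1 0 q : Fin n → Rˣ) i ^ a i = q ^ a 0 := by
  rw [Finset.prod_eq_single 0] <;> simp +contextual

end Laurent

theorem statement5_general (n : ℕ) [NeZero n] (q τ : Rˣ) (c : R)
    (W : Equiv.Perm (Fin n) → Module.End R (Laur R n))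
    (hW : ∀ (w : Equiv.Perm (Fin n)) (a : Fin n →₀ ℤ) (r : R),
      W w (mono a r) = mono (Finsupp.equivMapDomain w a) r)
    (T Ti : ℕ → Module.End R (Laur R n))
    (hT : ∀ (k : ℕ) (hk : k + 1 < n) (p : Laur R n),
      (Xel ⟨k + 1, hk⟩ - Xel ⟨k, Nat.lt_of_succ_lt hk⟩) * T k p
        = ((↑τ⁻¹ : R) • Xel ⟨k + 1, hk⟩ - (τ : R) • Xel ⟨k, Nat.lt_of_succ_lt hk⟩)
            * W (Equiv.swap ⟨k, Nat.lt_of_succ_lt hk⟩ ⟨k + 1, hk⟩) p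
          + ((τ : R) - ↑τ⁻¹) • (Xel ⟨k + 1, hk⟩ * p))
    (hTi : ∀ k, k + 1 < n → Ti k = T k + ((↑τ⁻¹ : R) - τ) • (1 : Module.End R (Laur R n)))
    (piInv : Module.End R (Laur R n))
    (hpiInv : ∀ (a : Fin n →₀ ℤ) (r : R),
      piInv (mono a r)
        = (↑(q ^ a 0) : R) • mono (Finsupp.equivMapDomain (finRotate n).symm a) r)
    (Y : (Module.End R (Laur R n))ˣ)
    (hY : (Y : Module.End R (Laur R n)) = piInv * aF Ti 0 (n - 1))
    (D : ℕ → Module.End R (Laur R n))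
    (hD : ∀ i, D i = aF T i (n - 1 - i) * (c • (XinvOp (n - 1) * ((Y : Module.End R (Laur R n))
        - (↑Y⁻¹ : Module.End R (Laur R n)))))
      * dF T i (n - 1 - i))
    (i j : ℕ) (hi : i < n) (hj : j < n) : D i * D j = D j * D i := by
  obtain ⟨N, rfl⟩ := Nat.exists_eq_add_one_of_ne_zero (NeZero.ne n)
  have hWmap (w : Equiv.Perm (Fin (N + 1))) : W w = (monomialMap 1 w).toLinearMap :=
    eq_monomialMap_of_apply_mono fun a r ↦ by simp [hW]
  have hπmap : piInv = (cyclicShift q).toLinearMap :=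
    eq_monomialMap_of_apply_mono fun a r ↦ by rw [hpiInv, prod_update_one_zpow]
  have hDL (k : Fin N) : IsDemazureLusztig τ (monomialMap 1 (Equiv.swap k.castSucc k.succ))
      (Xel k.castSucc) (T k) :=
    .of_swap Fin.castSucc_lt_succ.ne fun f ↦
      (hT k (Nat.succ_lt_succ k.2) f).trans <| by rw [hWmap]; rfl
  have hYmap : (Y : Module.End R (Laur R (N + 1))) =
      (cyclicShift q).toLinearMap * aF (fun k ↦ T k + ((↑τ⁻¹ : R) - τ) • 1) 0 N := by
    rw [hY, hπmap]
    exact congrArg _ <| aF_congr fun k _ hk ↦ hTi k (by omega)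
  have hDmap (i : ℕ) : D i = c • dunkl T Y i := by
    rw [dunkl, ← transport_smul, hD, XinvOp, dif_pos (show N + 1 - 1 < N + 1 from N.lt_succ_self)]
    rfl
  rw [hDmap, hDmap]
  exact ((commute_dunkl hDL hYmap (Nat.le_of_lt_succ hi)
    (Nat.le_of_lt_succ hj)).smul_left c).smul_right c

/-- The `q`-Dunkl-type operators `D_i` of the DAHA polynomial representation pairwise commute (all indices `0`-based). -/
theorem statement5
    (F : Type*) [Field F] (n : ℕ) [NeZero n]
    (q τ : F) (hq : q ≠ 0) (hqroot : ∀ m : ℕ, m ≠ 0 → q ^ m ≠ 1) (hτ : τ ≠ 0)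
    -- the action of the symmetric group permuting the variables
    (W : Equiv.Perm (Fin n) → Module.End F (Laur F n))
    (hW : ∀ (w : Equiv.Perm (Fin n)) (a : Fin n →₀ ℤ) (c : F),
      W w (mono a c) = mono (Finsupp.equivMapDomain w a) c)
    -- the Demazure–Lusztig operators `T_k` and their inverses `Ti k = T k + τ⁻¹ - τ`
    (T Ti : ℕ → Module.End F (Laur F n))
    (hT : ∀ (k : ℕ) (hk : k + 1 < n) (p : Laur F n),
      (Xel ⟨k + 1, hk⟩ - Xel ⟨k, Nat.lt_of_succ_lt hk⟩) * T k p
        = (τ⁻¹ • Xel ⟨k + 1, hk⟩ - τ • Xel ⟨k, Nat.lt_of_succ_lt hk⟩)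
            * W (Equiv.swap ⟨k, Nat.lt_of_succ_lt hk⟩ ⟨k + 1, hk⟩) p
          + (τ - τ⁻¹) • (Xel ⟨k + 1, hk⟩ * p))
    (hTi : ∀ k, Ti k = T k + (τ⁻¹ - τ) • (1 : Module.End F (Laur F n)))
    (hTinv : ∀ k, k + 1 < n → T k * Ti k = 1 ∧ Ti k * T k = 1)
    -- the operator `π⁻¹`
    (piInv : Module.End F (Laur F n))
    (hpiInv : ∀ (a : Fin n →₀ ℤ) (c : F),
      piInv (mono a c)
        = q ^ (a 0) • mono (Finsupp.equivMapDomain (finRotate n).symm a) c)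
    -- the operators `Y_i = T_i ⋯ T_{n-1} ⬝ π⁻¹ ⬝ T_1⁻¹ ⋯ T_{i-1}⁻¹` and their inverses
    (Y Yi : ℕ → Module.End F (Laur F n))
    (hY : ∀ i, Y i = aF T i (n - 1 - i) * piInv * aF Ti 0 i)
    (hYinv : ∀ i, i < n → Y i * Yi i = 1 ∧ Yi i * Y i = 1)
    -- the `q`-Dunkl-type operators `D_i`
    (D : ℕ → Module.End F (Laur F n))
    (hD : ∀ i, D i = aF T i (n - 1 - i)
        * ((q - q⁻¹)⁻¹ • (XinvOp (n - 1) * (Y (n - 1) - Yi (n - 1))))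
        * dF T i (n - 1 - i))
    :
    ∀ i j : ℕ, i < n → j < n → D i * D j = D j * D i := by
  have hlt : n - 1 < n := Nat.sub_lt (NeZero.pos n) Nat.one_pos
  exact statement5_general n (Units.mk0 q hq) (Units.mk0 τ hτ) (q - q⁻¹)⁻¹ W hW T Ti
    (by simpa using hT) (fun k _ ↦ by simpa using hTi k) piInv
    (by simpa using hpiInv)
    ⟨Y (n - 1), Yi (n - 1), (hYinv _ hlt).1, (hYinv _ hlt).2⟩
    (by simp [hY, aF_zero]) D hD
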